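/- arXiv:1804.01450 — 2 statements merged into one kernel-verified Lean document; each statement's English description precedes it below -/
import Mathlib

section
/- Let r(n) be the resonator sequence with parameter L, and let ω(n) ≥ 0 be a multiplicative function satisfying: Σ_{X ≤ p ≤ Y} ω(p)/(p log p) ≤ a_ω (1/log X − 1/log Y) + O_ω(1/log²X) for all Y ≥ 2X ≥ 4, for some a_ω > 0. Then for every N with L ≤ √(a_ω^{−1} log N log log N): Σ_{n ≤ N} r(n)² ω(n) = (1 + o*(1)) ∏_p (1 + r(p)² ω(p)). If, additionally, ω′(n) ≥ 0 is a multiplicative function satisfying Σ_{p ≤ X} ω′(p)/p ≪ e^{√(log X)}/log X, then Σ_{nm ≤ N, gcd(n,m)=1} r(n)² r(m) ω(n) ω′(m)/√m = (1 + o*(1)) ∏_p (1 + r(p)² ω(p) + r(p) ω′(p)/√p). Here o*(1) denotes a quantity that is O_C(N^{−C/(log log N)³}) for any C > 0. -/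
open Filter

noncomputable section

/-- The value at the prime `p` of the resonator sequence with parameter `L`:
`r(p) = L/(√p log p)` for `L² ≤ p ≤ exp(log² L)`, and `r(p) = 0` otherwise. -/
def rpR (L : ℝ) (p : ℕ) : ℝ :=
  if L ^ 2 ≤ (p : ℝ) ∧ (p : ℝ) ≤ Real.exp ((Real.log L) ^ 2) then
    L / (Real.sqrt p * Real.log p) else 0

/-- The resonator sequence `r(n)`: the multiplicative function supported on squarefree
positive integers with `r(p) = rpR L p` at primes. -/
def resR (L : ℝ) (n : ℕ) : ℝ :=
  if Squarefree n then ∏ p ∈ n.primeFactors, rpR L p else 0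

def sfun (h : ℕ → ℝ) (n : ℕ) : ℝ :=
  if Squarefree n then ∏ p ∈ n.primeFactors, h p else 0

def SF (h : ℕ → ℝ) : ArithmeticFunction ℝ := ⟨sfun h, by simp [sfun]⟩

lemma SF_apply (h : ℕ → ℝ) (n : ℕ) : SF h n = sfun h n := rfl

lemma sfun_prime (h : ℕ → ℝ) {p : ℕ} (hp : p.Prime) : sfun h p = h p := by
  simp [sfun, hp.prime.squarefree, hp.primeFactors]

lemma SF_mult (h : ℕ → ℝ) : (SF h).IsMultiplicative := by
  refine ⟨by simp [SF_apply, sfun], ?_⟩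
  intro m n hmn
  simp only [SF_apply, sfun, Nat.squarefree_mul hmn]
  by_cases hm : Squarefree m <;> by_cases hn : Squarefree n <;> simp [hm, hn]
  rw [hmn.primeFactors_mul, Finset.prod_union hmn.disjoint_primeFactors]

lemma sfun_nonneg {h : ℕ → ℝ} (hh : ∀ p, 0 ≤ h p) (n : ℕ) : 0 ≤ sfun h n := by
  unfold sfun; split_ifs
  · exact Finset.prod_nonneg fun p _ => hh p
  · exact le_rfl

lemma mult_sqf {F : ℕ → ℝ} (h1 : F 1 = 1)
    (hm : ∀ m n : ℕ, Nat.Coprime m n → F (m * n) = F m * F n) {n : ℕ} (hn : Squarefree n) :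
    F n = ∏ p ∈ n.primeFactors, F p := by
  have key : ∀ t : Finset ℕ, (∀ p ∈ t, p.Prime) → F (∏ p ∈ t, p) = ∏ p ∈ t, F p := by
    intro t
    induction t using Finset.induction_on with
    | empty => intro _; simpa using h1
    | insert a s ha ih =>
      intro hp
      rw [Finset.prod_insert ha, Finset.prod_insert ha, hm, ih fun p hp' => hp p (by simp [hp'])]
      refine Nat.Coprime.prod_right fun p hps => ?_
      rw [Nat.coprime_primes (hp a (by simp)) (hp p (by simp [hps]))]
      rintro rfl; exact ha hps
  have := key n.primeFactors fun p hp => Nat.prime_of_mem_primeFactors hp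
  rwa [Nat.prod_primeFactors_of_squarefree hn] at this

lemma sum_pairs (G : ℕ → ℕ → ℝ) (N : ℕ) :
    ∑ n ∈ Finset.Icc 1 N, ∑ m ∈ Finset.Icc 1 (N / n), G n m =
      ∑ k ∈ Finset.Icc 1 N, ∑ x ∈ k.divisorsAntidiagonal, G x.1 x.2 := by
  rw [Finset.sum_sigma', Finset.sum_sigma']
  refine Finset.sum_bij' (fun a _ => ⟨a.1 * a.2, (a.1, a.2)⟩) (fun b _ => ⟨b.2.1, b.2.2⟩) ?_ ?_ ?_ ?_ ?_
  · rintro ⟨n, m⟩ h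
    simp only [Finset.mem_sigma, Finset.mem_Icc, Nat.mem_divisorsAntidiagonal] at h ⊢
    obtain ⟨⟨h1, h2⟩, h3, h4⟩ := h
    have := (Nat.le_div_iff_mul_le (by omega)).1 h4
    have h5 : 0 < n * m := Nat.mul_pos (by omega) (by omega)
    exact ⟨⟨h5, by rwa [mul_comm]⟩, by simp, h5.ne'⟩
  · rintro ⟨k, n, m⟩ h
    simp only [Finset.mem_sigma, Finset.mem_Icc, Nat.mem_divisorsAntidiagonal] at h ⊢
    obtain ⟨⟨h1, h2⟩, rfl, h4⟩ := h
    have hn : 0 < n := Nat.pos_of_ne_zero (by rintro rfl; simp at h4)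
    have hm : 0 < m := Nat.pos_of_ne_zero (by rintro rfl; simp at h4)
    refine ⟨⟨hn, le_trans (Nat.le_mul_of_pos_right _ hm) h2⟩, hm, ?_⟩
    rw [Nat.le_div_iff_mul_le hn]; rwa [mul_comm]
  · rintro ⟨n, m⟩ h; rfl
  · rintro ⟨k, n, m⟩ h
    simp only [Finset.mem_sigma, Finset.mem_Icc, Nat.mem_divisorsAntidiagonal] at h ⊢
    obtain ⟨⟨h1, h2⟩, rfl, h4⟩ := h
    rfl
  · rintro ⟨n, m⟩ h; rfl

lemma pair_sum_eq (f g : ℕ → ℝ) (N : ℕ) :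
    (∑ n ∈ Finset.Icc 1 N, ∑ m ∈ Finset.Icc 1 (N / n),
      if Nat.Coprime n m then sfun f n * sfun g m else 0) =
    ∑ k ∈ Finset.Icc 1 N, sfun (fun p => f p + g p) k := by
  rw [sum_pairs (fun n m => if Nat.Coprime n m then sfun f n * sfun g m else 0)]
  refine Finset.sum_congr rfl fun k _ => ?_
  by_cases hk : Squarefree k
  · have h := (SF_mult f).prodPrimeFactors_add_of_squarefree (SF_mult g) hk
    rw [ArithmeticFunction.mul_apply, ArithmeticFunction.prodPrimeFactors_apply hk.ne_zero] at h
    have h2 : sfun (fun p => f p + g p) k = ∏ p ∈ k.primeFactors, (SF f + SF g) p := by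
      simp only [sfun, hk, if_true]
      refine Finset.prod_congr rfl fun p hp => ?_
      have hp' := Nat.prime_of_mem_primeFactors hp
      simp [SF_apply, sfun_prime, hp']
    rw [h2, h]
    refine Finset.sum_congr rfl fun x hx => ?_
    obtain ⟨hx, -⟩ := Nat.mem_divisorsAntidiagonal.1 hx
    have : Nat.Coprime x.1 x.2 := Nat.coprime_of_squarefree_mul (hx ▸ hk)
    simp [this, SF_apply]
  · rw [show sfun (fun p => f p + g p) k = 0 by simp [sfun, hk]]
    refine Finset.sum_eq_zero fun x hx => ?_
    obtain ⟨hx, -⟩ := Nat.mem_divisorsAntidiagonal.1 hx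
    split_ifs with hc
    · rw [← hx, Nat.squarefree_mul hc] at hk
      by_cases h1 : Squarefree x.1
      · have h2 : ¬ Squarefree x.2 := fun h => hk ⟨h1, h⟩
        simp [sfun, h2]
      · simp [sfun, h1]
    · rfl

lemma rankin (h : ℕ → ℝ) (hh : ∀ p, 0 ≤ h p) (P : Finset ℕ) (hP : ∀ p ∈ P, p.Prime)
    (h0 : ∀ p, p.Prime → p ∉ P → h p = 0) (α : ℝ) (hα : 0 ≤ α) (N : ℕ) (hN : 0 < N) :
    |(∑ k ∈ Finset.Icc 1 N, sfun h k) - ∏ p ∈ P, (1 + h p)| ≤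
      (N : ℝ) ^ (-α) * ∏ p ∈ P, (1 + (p : ℝ) ^ α * h p) := by
  set Q := ∏ p ∈ P, p with hQ
  have hQP : Q.primeFactors = P := Nat.primeFactors_prod hP
  have hQs : Squarefree Q := by
    refine Finset.squarefree_prod_of_pairwise_isCoprime ?_ fun p hp => (hP p hp).prime.squarefree
    intro p hp q hq hpq
    exact Nat.coprime_iff_isRelPrime.1 ((Nat.coprime_primes (hP p hp) (hP q hq)).2 hpq)
  have e1 : ∀ h : ℕ → ℝ, ∏ p ∈ P, (1 + h p) = ∑ d ∈ Q.divisors, sfun h d := by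
    intro h
    have := (SF_mult h).prodPrimeFactors_one_add_of_squarefree hQs
    rw [hQP] at this
    simp only [SF_apply] at this
    rw [← this]
    exact Finset.prod_congr rfl fun p hp => by rw [sfun_prime _ (hP p hp)]
  have e2 : ∀ k, sfun h k ≠ 0 → k ∈ Q.divisors := by
    intro k hk
    have hs : Squarefree k := by
      by_contra hs; simp [sfun, hs] at hk
    simp only [sfun, hs, if_true] at hk
    rw [Nat.mem_divisors]
    refine ⟨?_, hQs.ne_zero⟩
    rw [← Nat.prod_primeFactors_of_squarefree hs]
    refine Finset.prod_dvd_prod_of_subset _ _ _ fun p hp => ?_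
    by_contra hpP
    exact hk (Finset.prod_eq_zero hp (h0 p (Nat.prime_of_mem_primeFactors hp) hpP))
  have e3 : ∑ k ∈ Finset.Icc 1 N, sfun h k = ∑ k ∈ Q.divisors.filter (· ≤ N), sfun h k := by
    symm
    refine Finset.sum_subset ?_ ?_
    · intro k hk
      simp only [Finset.mem_filter, Finset.mem_Icc] at hk ⊢
      exact ⟨Nat.pos_of_mem_divisors hk.1, hk.2⟩
    · intro k hk hk'
      by_contra hne
      exact hk' (Finset.mem_filter.2 ⟨e2 k hne, (Finset.mem_Icc.1 hk).2⟩)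
  rw [e1 h, e1, e3, ← Finset.sum_filter_add_sum_filter_not Q.divisors (· ≤ N)]
  have hn : 0 ≤ ∑ k ∈ Q.divisors.filter (fun k => ¬ k ≤ N), sfun h k :=
    Finset.sum_nonneg fun k _ => sfun_nonneg hh k
  rw [show ∀ a b : ℝ, a - (a + b) = -b by intros; ring, abs_neg, abs_of_nonneg hn,
    Finset.mul_sum]
  have e4 : ∀ k, sfun (fun p => (p : ℝ) ^ α * h p) k = (k : ℝ) ^ α * sfun h k := by
    intro k
    by_cases hk : Squarefree k
    · simp only [sfun, hk, if_true, Finset.prod_mul_distrib]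
      congr 1
      refine (mult_sqf (F := fun n => (n : ℝ) ^ α) (by simp) ?_ hk).symm
      intro m n _
      push_cast
      exact Real.mul_rpow (by positivity) (by positivity)
    · simp [sfun, hk]
  have hNp : (0 : ℝ) < N := by exact_mod_cast hN
  calc ∑ k ∈ Q.divisors.filter (fun k => ¬ k ≤ N), sfun h k
      ≤ ∑ k ∈ Q.divisors.filter (fun k => ¬ k ≤ N),
          (N : ℝ) ^ (-α) * sfun (fun p => (p : ℝ) ^ α * h p) k := by
        refine Finset.sum_le_sum fun k hk => ?_
        have hk' : (N : ℝ) ≤ k := by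
          have := (Finset.mem_filter.1 hk).2
          exact_mod_cast (not_le.1 this).le
        rw [e4, ← mul_assoc]
        refine le_mul_of_one_le_left (sfun_nonneg hh k) ?_
        calc (1 : ℝ) = (N : ℝ) ^ (-α) * (N : ℝ) ^ α := by
              rw [← Real.rpow_add hNp]; simp
          _ ≤ _ := by gcongr
    _ ≤ _ := by
        refine Finset.sum_le_sum_of_subset_of_nonneg (Finset.filter_subset _ _) fun k _ _ => ?_
        rw [e4]
        have := sfun_nonneg hh k
        positivity

lemma S1_bound (ω : ℕ → ℝ) (hω0 : ∀ n, 0 ≤ ω n) (a c : ℝ) (ha : 0 < a)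
    (hb : ∀ X Y : ℝ, 2 ≤ X → 2 * X ≤ Y →
      ∑ p ∈ (Finset.Icc ⌈X⌉₊ ⌊Y⌋₊).filter Nat.Prime, ω p / (p * Real.log p) ≤
        a * (1 / Real.log X - 1 / Real.log Y) + c / (Real.log X) ^ 2) (X Y : ℝ) (hX : 2 ≤ X) :
    ∑ p ∈ (Finset.Icc ⌈X⌉₊ ⌊Y⌋₊).filter Nat.Prime, ω p / (p * Real.log p) ≤
      a / Real.log X + |c| / (Real.log X) ^ 2 := by
  have h := hb X (max Y (2 * X)) hX (le_max_right _ _)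
  have hl : 0 < Real.log X := Real.log_pos (by linarith)
  have hl2 : 0 < Real.log (max Y (2 * X)) :=
    Real.log_pos (lt_of_lt_of_le (by linarith) (le_max_right _ _))
  have h1 : ∑ p ∈ (Finset.Icc ⌈X⌉₊ ⌊Y⌋₊).filter Nat.Prime, ω p / (p * Real.log p) ≤
      ∑ p ∈ (Finset.Icc ⌈X⌉₊ ⌊max Y (2 * X)⌋₊).filter Nat.Prime, ω p / (p * Real.log p) := by
    refine Finset.sum_le_sum_of_subset_of_nonneg ?_ ?_
    · refine Finset.filter_subset_filter _ (Finset.Icc_subset_Icc le_rfl ?_)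
      exact Nat.floor_mono (le_max_left _ _)
    · intro p _ _
      have := hω0 p
      have := Real.log_natCast_nonneg p
      positivity
  have h2 : c / (Real.log X) ^ 2 ≤ |c| / (Real.log X) ^ 2 := by
    gcongr; exact le_abs_self c
  have h3 : 0 ≤ a * (1 / Real.log (max Y (2 * X))) := by positivity
  have h4 : a * (1 / Real.log X) = a / Real.log X := by ring
  linarith [mul_sub a (1 / Real.log X) (1 / Real.log (max Y (2 * X)))]

lemma S0_step (ω : ℕ → ℝ) (hω0 : ∀ n, 0 ≤ ω n) (a c : ℝ) (ha : 0 < a)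
    (hb : ∀ X Y : ℝ, 2 ≤ X →
      ∑ p ∈ (Finset.Icc ⌈X⌉₊ ⌊Y⌋₊).filter Nat.Prime, ω p / (p * Real.log p) ≤
      a / Real.log X + |c| / (Real.log X) ^ 2) (X Y : ℝ) (hX : 2 ≤ X) (hY : Y ≤ X ^ 2) :
    ∑ p ∈ (Finset.Icc ⌈X⌉₊ ⌊Y⌋₊).filter Nat.Prime, ω p / p ≤ 2 * a + 4 * |c| := by
  have hl : 1 / 2 < Real.log X := by
    have := Real.log_le_log (by norm_num) hX
    have := Real.log_two_gt_d9
    linarith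
  calc ∑ p ∈ (Finset.Icc ⌈X⌉₊ ⌊Y⌋₊).filter Nat.Prime, ω p / p
      ≤ ∑ p ∈ (Finset.Icc ⌈X⌉₊ ⌊Y⌋₊).filter Nat.Prime,
        (2 * Real.log X) * (ω p / (p * Real.log p)) := by
        refine Finset.sum_le_sum fun p hp => ?_
        simp only [Finset.mem_filter, Finset.mem_Icc] at hp
        obtain ⟨⟨h1, h2⟩, h3⟩ := hp
        have hp0 : (1 : ℝ) < p := by exact_mod_cast h3.one_lt
        have hlp : 0 < Real.log p := Real.log_pos hp0
        have hpY : (p : ℝ) ≤ X ^ 2 := ((Nat.le_floor_iff' h3.ne_zero).1 h2).trans hY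
        have : Real.log p ≤ 2 * Real.log X := by
          have := Real.log_le_log (by linarith) hpY
          rwa [Real.log_pow] at this
        have hw := hω0 p
        calc ω p / p = Real.log p * (ω p / (p * Real.log p)) := by field_simp
          _ ≤ _ := by gcongr
    _ = 2 * Real.log X * ∑ p ∈ (Finset.Icc ⌈X⌉₊ ⌊Y⌋₊).filter Nat.Prime,
          (ω p / (p * Real.log p)) := by rw [Finset.mul_sum]
    _ ≤ 2 * Real.log X * (a / Real.log X + |c| / (Real.log X) ^ 2) := by
        gcongr; exact hb X Y hX
    _ = 2 * a + 2 * |c| / Real.log X := by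
        have : Real.log X ≠ 0 := by linarith
        field_simp
    _ ≤ _ := by
        have : 2 * |c| / Real.log X ≤ 4 * |c| := by
          rw [div_le_iff₀ (by linarith)]
          nlinarith [abs_nonneg c]
        linarith

lemma S0_bound (ω : ℕ → ℝ) (hω0 : ∀ n, 0 ≤ ω n) (B : ℝ)
    (hs : ∀ X Y : ℝ, 2 ≤ X → Y ≤ X ^ 2 →
      ∑ p ∈ (Finset.Icc ⌈X⌉₊ ⌊Y⌋₊).filter Nat.Prime, ω p / p ≤ B) (K : ℕ) :
    ∀ X Y : ℝ, 2 ≤ X → Y ≤ X ^ (2 ^ K) →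
      ∑ p ∈ (Finset.Icc ⌈X⌉₊ ⌊Y⌋₊).filter Nat.Prime, ω p / p ≤ B * (K + 1) := by
  induction K with
  | zero =>
    intro X Y hX hY
    have := hs X Y hX (hY.trans (by norm_num; nlinarith))
    simpa using this
  | succ K ih =>
    intro X Y hX hY
    have h1 := hs X (X ^ 2) hX le_rfl
    have h2 := ih (X ^ 2) Y (by nlinarith) (hY.trans (by rw [← pow_mul, pow_succ, mul_comm]))
    have h3 : ∑ p ∈ (Finset.Icc ⌈X⌉₊ ⌊Y⌋₊).filter Nat.Prime, ω p / p ≤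
        ∑ p ∈ (Finset.Icc ⌈X⌉₊ ⌊X ^ 2⌋₊).filter Nat.Prime, ω p / p +
        ∑ p ∈ (Finset.Icc ⌈X ^ 2⌉₊ ⌊Y⌋₊).filter Nat.Prime, ω p / p := by
      have hnn : ∀ p : ℕ, 0 ≤ ω p / p := fun p => div_nonneg (hω0 p) (by positivity)
      rw [← Finset.sum_union_inter]
      refine le_trans (Finset.sum_le_sum_of_subset_of_nonneg ?_ fun p _ _ => hnn p)
        (le_add_of_nonneg_right (Finset.sum_nonneg fun p _ => hnn p))
      intro p hp
      simp only [Finset.mem_filter, Finset.mem_Icc, Finset.mem_union] at hp ⊢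
      obtain ⟨⟨ha, hb⟩, hc⟩ := hp
      rcases le_total (p : ℝ) (X ^ 2) with h | h
      · exact Or.inl ⟨⟨ha, Nat.le_floor h⟩, hc⟩
      · exact Or.inr ⟨⟨Nat.ceil_le.2 h, hb⟩, hc⟩
    push_cast
    linarith

/-- the final real inequality -/
lemma final_ineq (A B1 B2 C c : ℝ) (hA : 0 < A) (hB1 : 0 ≤ B1) (hB2 : 0 ≤ B2) (hc : 0 < c)
    (hcB : c * B2 ≤ A / 16)
    (x L : ℝ) (hx : 2 ≤ x) (hxA : 2 * |Real.log A| ≤ Real.log x)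
    (hxB : 64 * B1 / A ≤ Real.log x) (hxC : 8 * C / c ≤ Real.log x)
    (hL : Real.exp 1 ≤ L) (hLM : L ≤ Real.sqrt (A⁻¹ * Real.exp x * x)) :
    Real.log L ≤ x ∧
    c / x ^ 2 * (-Real.exp x + A * L ^ 2 / (2 * Real.log L) + B1 * L ^ 2 / (Real.log L) ^ 2
      + c / x ^ 2 * L ^ 2 * (B2 * Real.log x)) ≤ Real.exp x * (-C / x ^ 3) := by
  set M := Real.sqrt (A⁻¹ * Real.exp x * x) with hM
  have hx0 : 0 < x := by linarith
  have hM2 : M ^ 2 = A⁻¹ * Real.exp x * x := Real.sq_sqrt (by positivity)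
  have hL0 : 0 < L := (Real.exp_pos 1).trans_le hL
  have hM0 : 0 < M := hL0.trans_le hLM
  have hℓ : 1 ≤ Real.log L := by rwa [Real.le_log_iff_exp_le hL0]
  have hlm : Real.log L ≤ Real.log M := Real.log_le_log hL0 hLM
  set y := Real.log x - Real.log A with hy
  have hlogM : Real.log M = (x + y) / 2 := by
    rw [hM, Real.log_sqrt (by positivity), Real.log_mul (by positivity) (by positivity),
      Real.log_mul (by positivity) (by positivity), Real.log_inv, Real.log_exp]
    ring
  have hlx0 : 0 < Real.log x := Real.log_pos (by linarith)
  have hlx : Real.log x ≤ x / 2 := by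
    have h1 : Real.log x = Real.log (x / 2) + Real.log 2 := by
      rw [← Real.log_mul (by positivity) (by positivity)]; congr 1; ring
    have h2 := Real.log_le_sub_one_of_pos (show 0 < x / 2 by positivity)
    have := Real.log_two_lt_d9
    linarith
  have hy1 : Real.log x / 2 ≤ y := by
    have := le_abs_self (Real.log A); linarith
  have hy2 : y ≤ x := by
    have := neg_abs_le (Real.log A); linarith
  have hmx : Real.log M ≤ x := by linarith
  refine ⟨hlm.trans hmx, ?_⟩
  have hanti := Real.log_div_self_antitoneOn hL (hL.trans hLM) hLM
  simp only at hanti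
  have hm0 : 0 < Real.log M := by linarith
  have hr : L / Real.log L ≤ M / Real.log M := by
    rw [div_le_div_iff₀ (by linarith) hm0]
    rw [div_le_div_iff₀ hM0 hL0] at hanti
    linarith
  have hr0 : 0 ≤ L / Real.log L := by positivity
  have t1 : A * L ^ 2 / (2 * Real.log L) ≤ Real.exp x * (x / (x + y)) := by
    calc A * L ^ 2 / (2 * Real.log L) = A / 2 * (L * (L / Real.log L)) := by
          field_simp
      _ ≤ A / 2 * (M * (M / Real.log M)) := by gcongr
      _ = A / 2 * M ^ 2 / Real.log M := by field_simp
      _ = _ := by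
        rw [hM2, hlogM]
        have : x + y ≠ 0 := by linarith
        field_simp
  have t2 : B1 * L ^ 2 / (Real.log L) ^ 2 ≤ Real.exp x * (4 * B1 / A / x) := by
    calc B1 * L ^ 2 / (Real.log L) ^ 2 = B1 * (L / Real.log L) ^ 2 := by ring
      _ ≤ B1 * (M / Real.log M) ^ 2 := by gcongr
      _ = B1 * M ^ 2 / (Real.log M) ^ 2 := by ring
      _ ≤ B1 * M ^ 2 / (x / 2) ^ 2 := by
        gcongr; linarith
      _ = _ := by rw [hM2]; field_simp; norm_num
  have t3 : c / x ^ 2 * L ^ 2 * (B2 * Real.log x) ≤ Real.exp x * (Real.log x / 16 / x) := by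
    calc c / x ^ 2 * L ^ 2 * (B2 * Real.log x) ≤ c / x ^ 2 * M ^ 2 * (B2 * Real.log x) := by
          gcongr
      _ = (c * B2) * (A⁻¹ * Real.exp x * Real.log x / x) := by rw [hM2]; field_simp
      _ ≤ (A / 16) * (A⁻¹ * Real.exp x * Real.log x / x) := by gcongr
      _ = _ := by field_simp
  have t4 : x / (x + y) ≤ 1 - Real.log x / 4 / x := by
    rw [div_le_iff₀ (by linarith)]
    have : Real.log x / 4 / x * (x + y) ≤ y := by
      calc Real.log x / 4 / x * (x + y) ≤ Real.log x / 4 / x * (2 * x) := by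
            gcongr; linarith
        _ = Real.log x / 2 := by field_simp; norm_num
        _ ≤ y := hy1
    linarith
  have t5 : 4 * B1 / A / x ≤ Real.log x / 16 / x := by
    refine div_le_div_of_nonneg_right ?_ hx0.le
    have : 64 * B1 / A = 16 * (4 * B1 / A) := by ring
    linarith
  have t6 : C / c / x ≤ Real.log x / 8 / x := by
    refine div_le_div_of_nonneg_right ?_ hx0.le
    have : 8 * C / c = 8 * (C / c) := by ring
    linarith
  have hE := Real.exp_pos x
  have key : -Real.exp x + A * L ^ 2 / (2 * Real.log L) + B1 * L ^ 2 / (Real.log L) ^ 2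
      + c / x ^ 2 * L ^ 2 * (B2 * Real.log x) ≤ Real.exp x * (-(C / c / x)) := by
    have e : Real.exp x * (-1 + x / (x + y) + 4 * B1 / A / x + Real.log x / 16 / x) ≤
        Real.exp x * (-(C / c / x)) := by
      refine mul_le_mul_of_nonneg_left ?_ hE.le
      have : Real.log x / 4 / x = 4 * (Real.log x / 16 / x) := by ring
      have : Real.log x / 8 / x = 2 * (Real.log x / 16 / x) := by ring
      linarith
    linarith [mul_add (Real.exp x) (-1 + x / (x + y) + 4 * B1 / A / x) (Real.log x / 16 / x), mul_add (Real.exp x) (-1 + x / (x + y)) (4 * B1 / A / x), mul_add (Real.exp x) (-1) (x / (x + y))]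
  calc _ ≤ c / x ^ 2 * (Real.exp x * (-(C / c / x))) := by gcongr
    _ = _ := by field_simp

def Pset (L : ℝ) : Finset ℕ :=
  (Finset.Icc ⌈L ^ 2⌉₊ ⌊Real.exp ((Real.log L) ^ 2)⌋₊).filter Nat.Prime

lemma mem_Pset {L : ℝ} {p : ℕ} : p ∈ Pset L ↔
    (L ^ 2 ≤ (p : ℝ) ∧ (p : ℝ) ≤ Real.exp ((Real.log L) ^ 2)) ∧ p.Prime := by
  simp only [Pset, Finset.mem_filter, Finset.mem_Icc, Nat.ceil_le]
  rw [Nat.le_floor_iff (Real.exp_pos _).le]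

lemma rpR_nonneg {L : ℝ} (hL : 0 ≤ L) (p : ℕ) : 0 ≤ rpR L p := by
  unfold rpR
  split_ifs
  · have := Real.log_natCast_nonneg p
    positivity
  · exact le_rfl

lemma rpR_zero {L : ℝ} {p : ℕ} (hp : p.Prime) (h : p ∉ Pset L) : rpR L p = 0 := by
  unfold rpR
  rw [if_neg]
  exact fun h' => h (mem_Pset.2 ⟨h', hp⟩)

lemma tprod_Pset (L : ℝ) (h : ℕ → ℝ) (h0 : ∀ p, p.Prime → p ∉ Pset L → h p = 0) :
    ∏' p : Nat.Primes, (1 + h p) = ∏ p ∈ Pset L, (1 + h p) := by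
  let s : Finset Nat.Primes := (Pset L).subtype Nat.Prime
  rw [tprod_eq_prod (s := s)]
  · refine Finset.prod_bij (fun p _ => (p : ℕ)) ?_ ?_ ?_ ?_
    · intro p hp; exact Finset.mem_subtype.1 hp
    · intro p _ q _ hpq; exact Subtype.ext hpq
    · intro p hp; exact ⟨⟨p, (mem_Pset.1 hp).2⟩, Finset.mem_subtype.2 hp, rfl⟩
    · intro p _; rfl
  · intro p hp
    rw [h0 p p.2 fun h => hp (Finset.mem_subtype.2 h), add_zero]

lemma prod_ratio (h : ℕ → ℝ) (hh : ∀ p, 0 ≤ h p) (P : Finset ℕ) (hP : ∀ p ∈ P, p.Prime)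
    (α : ℝ) (hα : 0 ≤ α) :
    ∏ p ∈ P, (1 + (p : ℝ) ^ α * h p) ≤
      Real.exp (∑ p ∈ P, ((p : ℝ) ^ α - 1) * h p) * ∏ p ∈ P, (1 + h p) := by
  rw [Real.exp_sum, ← Finset.prod_mul_distrib]
  refine Finset.prod_le_prod (fun p _ => ?_) fun p hp => ?_
  · have := hh p; positivity
  · have h1 : (1 : ℝ) ≤ (p : ℝ) ^ α :=
      Real.one_le_rpow (by exact_mod_cast (hP p hp).one_lt.le) hα
    have h2 := hh p
    have h3 := Real.add_one_le_exp (((p : ℝ) ^ α - 1) * h p)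
    have h4 : 0 ≤ ((p : ℝ) ^ α - 1) * h p := mul_nonneg (by linarith) h2
    nlinarith

lemma term_bound (ω ω' : ℕ → ℝ) (hω0 : ∀ n, 0 ≤ ω n) (hω0' : ∀ n, 0 ≤ ω' n) (L α : ℝ)
    (hL : 0 < L) (hα : 0 ≤ α) (hαL : α * (Real.log L) ^ 2 ≤ 1) {p : ℕ} (hp : p ∈ Pset L) :
    ((p : ℝ) ^ α - 1) * ((rpR L p) ^ 2 * ω p + rpR L p * ω' p / Real.sqrt p) ≤
      α * L ^ 2 * (ω p / (p * Real.log p)) + α ^ 2 * L ^ 2 * (ω p / p)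
        + 2 * α * L * (ω' p / p) := by
  obtain ⟨hr, hpp⟩ := mem_Pset.1 hp
  have hp1 : (1 : ℝ) < p := by exact_mod_cast hpp.one_lt
  have hp0 : (0 : ℝ) < p := by linarith
  have hl : 0 < Real.log p := Real.log_pos hp1
  have hl2 : Real.log p ≤ (Real.log L) ^ 2 := by
    rw [Real.log_le_iff_le_exp hp0]; exact hr.2
  have hs : 0 < Real.sqrt p := Real.sqrt_pos.2 hp0
  have hss : Real.sqrt p ^ 2 = p := Real.sq_sqrt hp0.le
  have e1 : (rpR L p) ^ 2 * ω p = L ^ 2 * ω p / (p * Real.log p ^ 2) := by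
    rw [rpR, if_pos hr, div_pow, mul_pow, hss]; ring
  have e2 : rpR L p * ω' p / Real.sqrt p = L * ω' p / (p * Real.log p) := by
    rw [rpR, if_pos hr]
    rw [show (p : ℝ) * Real.log p = Real.sqrt p ^ 2 * Real.log p by rw [hss]]
    field_simp
  set t := α * Real.log p with ht
  have ht0 : 0 ≤ t := by positivity
  have ht1 : t ≤ 1 := le_trans (by rw [ht]; gcongr) hαL
  have e3 : (p : ℝ) ^ α = Real.exp t := by
    rw [Real.rpow_def_of_pos hp0, ht, mul_comm]
  have e4 : Real.exp t - 1 ≤ t + t ^ 2 := by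
    have := (abs_le.1 (Real.abs_exp_sub_one_sub_id_le (x := t) (by rwa [abs_of_nonneg ht0]))).2
    linarith
  have e5 : Real.exp t - 1 ≤ 2 * t := by nlinarith
  rw [e1, e2, e3, mul_add]
  have hw := hω0 p
  have hw' := hω0' p
  refine add_le_add ?_ ?_
  · calc (Real.exp t - 1) * (L ^ 2 * ω p / (p * Real.log p ^ 2))
        ≤ (t + t ^ 2) * (L ^ 2 * ω p / (p * Real.log p ^ 2)) := by gcongr
      _ = _ := by rw [ht]; field_simp
  · calc (Real.exp t - 1) * (L * ω' p / (p * Real.log p))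
        ≤ (2 * t) * (L * ω' p / (p * Real.log p)) := by gcongr
      _ = _ := by rw [ht]; field_simp

lemma resR_f (ω : ℕ → ℝ) (hω1 : ω 1 = 1)
    (hωm : ∀ m n : ℕ, Nat.Coprime m n → ω (m * n) = ω m * ω n) (L : ℝ) (n : ℕ) :
    (resR L n) ^ 2 * ω n = sfun (fun p => (rpR L p) ^ 2 * ω p) n := by
  by_cases hn : Squarefree n
  · simp only [resR, sfun, hn, if_true]
    rw [Finset.prod_mul_distrib, Finset.prod_pow, ← mult_sqf hω1 hωm hn]
  · simp [resR, sfun, hn]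

lemma resR_g (ω : ℕ → ℝ) (hω1 : ω 1 = 1)
    (hωm : ∀ m n : ℕ, Nat.Coprime m n → ω (m * n) = ω m * ω n) (L : ℝ) (n : ℕ) :
    resR L n * ω n / Real.sqrt n = sfun (fun p => rpR L p * ω p / Real.sqrt p) n := by
  by_cases hn : Squarefree n
  · simp only [resR, sfun, hn, if_true]
    rw [Finset.prod_div_distrib, Finset.prod_mul_distrib, ← mult_sqf hω1 hωm hn,
      ← mult_sqf (F := fun n => Real.sqrt n) (by simp) _ hn]
    intro m n _
    push_cast
    exact Real.sqrt_mul (by positivity) _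
  · simp [resR, sfun, hn]

set_option maxHeartbeats 1000000 in
lemma part2 (ω : ℕ → ℝ) (hω0 : ∀ n, 0 ≤ ω n) (hω1 : ω 1 = 1)
    (hωm : ∀ m n : ℕ, Nat.Coprime m n → ω (m * n) = ω m * ω n)
    (aω Cω : ℝ) (haω : 0 < aω)
    (hωbound : ∀ X Y : ℝ, 2 ≤ X → 2 * X ≤ Y →
      ∑ p ∈ (Finset.Icc ⌈X⌉₊ ⌊Y⌋₊).filter Nat.Prime, ω p / (p * Real.log p) ≤
        aω * (1 / Real.log X - 1 / Real.log Y) + Cω / (Real.log X) ^ 2)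
    (ω' : ℕ → ℝ) (hω0' : ∀ n, 0 ≤ ω' n) (hω1' : ω' 1 = 1)
    (hωm' : ∀ m n : ℕ, Nat.Coprime m n → ω' (m * n) = ω' m * ω' n)
    (Cω' : ℝ)
    (hωbound' : ∀ X : ℝ, 2 ≤ X →
        ∑ p ∈ (Finset.Iic ⌊X⌋₊).filter Nat.Prime, ω' p / p ≤
          Cω' * Real.exp (Real.sqrt (Real.log X)) / Real.log X)
    (C : ℝ) : ∃ D L₀ : ℝ, ∀ L : ℝ, L₀ ≤ L → ∀ N : ℕ, 16 ≤ N →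
        L ≤ Real.sqrt (aω⁻¹ * Real.log N * Real.log (Real.log N)) →
          |(∑ n ∈ Finset.Icc 1 N, ∑ m ∈ Finset.Icc 1 (N / n),
                if Nat.Coprime n m then
                  (resR L n) ^ 2 * resR L m * ω n * ω' m / Real.sqrt m else 0) -
              ∏' p : Nat.Primes, (1 + (rpR L p) ^ 2 * ω p + rpR L p * ω' p / Real.sqrt p)| ≤
            D * (N : ℝ) ^ (-C / (Real.log (Real.log N)) ^ 3) *
              ∏' p : Nat.Primes,
                (1 + (rpR L p) ^ 2 * ω p + rpR L p * ω' p / Real.sqrt p) := by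
  have hS1 := S1_bound ω hω0 aω Cω haω hωbound
  have hstep := S0_step ω hω0 aω Cω haω hS1
  have hS0 := S0_bound ω hω0 _ hstep
  set B := 2 * aω + 4 * |Cω| with hB
  have hB0 : 0 < B := by positivity
  set B1 := |Cω| + 2 * |Cω'| with hB1
  have hB10 : 0 ≤ B1 := by positivity
  set c := min 1 (aω / (16 * (5 * B))) with hc
  have hc0 : 0 < c := lt_min one_pos (by positivity)
  have hc1 : c ≤ 1 := min_le_left _ _
  have hcB : c * (5 * B) ≤ aω / 16 := by
    calc c * (5 * B) ≤ aω / (16 * (5 * B)) * (5 * B) := by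
          gcongr; exact min_le_right _ _
      _ = _ := by field_simp
  set T := max (max 1 (2 * |Real.log aω|)) (max (64 * B1 / aω) (8 * C / c)) with hT
  set x₀ := Real.exp T with hx₀
  refine ⟨1, max (Real.exp 1) (Real.sqrt (aω⁻¹ * Real.exp x₀ * x₀) + 1), ?_⟩
  intro L hL N hN hLM
  have hL1 : Real.exp 1 ≤ L := (le_max_left _ _).trans hL
  have hL2 : Real.sqrt (aω⁻¹ * Real.exp x₀ * x₀) + 1 ≤ L := (le_max_right _ _).trans hL
  have hL0 : 0 < L := (Real.exp_pos 1).trans_le hL1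
  have hNR : (16 : ℝ) ≤ N := by exact_mod_cast hN
  have hlogN : 1 ≤ Real.log N := by
    rw [Real.le_log_iff_exp_le (by linarith)]
    have := Real.exp_one_lt_d9
    linarith
  set x := Real.log (Real.log N) with hx
  have hxexp : Real.log N = Real.exp x := by rw [hx, Real.exp_log (by linarith)]
  have hx00 : 0 ≤ x := Real.log_nonneg hlogN
  rw [hxexp] at hLM
  have hxx : x₀ ≤ x := by
    by_contra hlt
    push Not at hlt
    have : Real.sqrt (aω⁻¹ * Real.exp x * x) ≤ Real.sqrt (aω⁻¹ * Real.exp x₀ * x₀) := by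
      apply Real.sqrt_le_sqrt
      gcongr
    linarith
  have hlx : T ≤ Real.log x := by
    rw [Real.le_log_iff_exp_le ((Real.exp_pos T).trans_le hxx)]; exact hxx
  have hT1 : 1 ≤ T := (le_max_left _ _).trans (le_max_left _ _)
  have hT2 : 2 * |Real.log aω| ≤ T := (le_max_right _ _).trans (le_max_left _ _)
  have hT3 : 64 * B1 / aω ≤ T := (le_max_left _ _).trans (le_max_right _ _)
  have hT4 : 8 * C / c ≤ T := (le_max_right _ _).trans (le_max_right _ _)
  have hx2 : 2 ≤ x := by
    have := Real.add_one_le_exp T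
    linarith
  have hx0 : 0 < x := by linarith
  obtain ⟨hℓx, hfin⟩ := final_ineq aω B1 (5 * B) C c haω hB10 (by positivity) hc0 hcB x L hx2
    (hT2.trans hlx) (hT3.trans hlx) (hT4.trans hlx) hL1 hLM
  have hℓ : 1 ≤ Real.log L := by rwa [Real.le_log_iff_exp_le hL0]
  have hLexp : Real.exp (Real.log L) = L := Real.exp_log hL0
  have he2 : (2.7 : ℝ) ≤ L := by have := Real.exp_one_gt_d9; linarith
  have hL22 : 2 ≤ L ^ 2 := by
    calc (2 : ℝ) ≤ 2.7 ^ 2 := by norm_num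
      _ ≤ L ^ 2 := by gcongr
  have hℓ2 : 1 ≤ Real.log L ^ 2 := one_le_pow₀ hℓ
  set ℓ := Real.log L with hℓdef
  set α := c / x ^ 2 with hα
  have hα0 : 0 ≤ α := by positivity
  have hαℓ : α * ℓ ^ 2 ≤ 1 := by
    calc α * ℓ ^ 2 ≤ α * x ^ 2 := by gcongr
      _ = c := by rw [hα]; field_simp
      _ ≤ 1 := hc1
  -- the sums
  have s1 : ∑ p ∈ Pset L, ω p / (p * Real.log p) ≤ aω / (2 * ℓ) + |Cω| / ℓ ^ 2 := by
    have h := hS1 (L ^ 2) (Real.exp (ℓ ^ 2)) hL22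
    rw [Real.log_pow] at h
    push_cast at h
    refine h.trans ?_
    gcongr
    linarith
  have s0 : ∑ p ∈ Pset L, ω p / p ≤ 5 * B * Real.log x := by
    set K := ⌈Real.log x / Real.log 2⌉₊ with hK
    have hl2 := Real.log_two_gt_d9
    have hlx0 : 1 ≤ Real.log x := hT1.trans hlx
    have hK1 : (K : ℝ) ≤ Real.log x / Real.log 2 + 1 := (Nat.ceil_lt_add_one (by positivity)).le
    have hK2 : x ≤ (2 : ℝ) ^ K := by
      have h1 : Real.log x / Real.log 2 ≤ K := Nat.le_ceil _
      rw [div_le_iff₀ (by linarith)] at h1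
      rw [← Real.log_le_log_iff hx0 (by positivity), Real.log_pow]
      exact h1
    have h := hS0 K (L ^ 2) (Real.exp (ℓ ^ 2)) hL22 (by
      rw [← hLexp, ← Real.exp_nat_mul, ← Real.exp_nat_mul, Real.exp_le_exp]
      push_cast
      have h1 := mul_le_mul_of_nonneg_right (hℓx.trans hK2) (show 0 ≤ ℓ by linarith)
      have h2 : 0 ≤ (2 : ℝ) ^ K * ℓ := by positivity
      linarith [sq ℓ, h1, h2, mul_left_comm ((2 : ℝ) ^ K) 2 ℓ])
    refine h.trans ?_
    have : Real.log x / Real.log 2 ≤ 2 * Real.log x := by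
      rw [div_le_iff₀ (by linarith)]
      nlinarith
    calc B * ((K : ℝ) + 1) ≤ B * (5 * Real.log x) := by
          gcongr; linarith
      _ = _ := by ring
  have s2 : ∑ p ∈ Pset L, ω' p / p ≤ |Cω'| * L / ℓ ^ 2 := by
    have h := hωbound' (Real.exp (ℓ ^ 2)) (by
      have := Real.add_one_le_exp (ℓ ^ 2)
      linarith)
    rw [Real.log_exp, Real.sqrt_sq (by linarith), hLexp] at h
    refine le_trans (Finset.sum_le_sum_of_subset_of_nonneg ?_ ?_) (h.trans ?_)
    · refine Finset.filter_subset_filter _ ?_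
      intro p hp
      exact Finset.mem_Iic.2 (Finset.mem_Icc.1 hp).2
    · intro p _ _
      have := hω0' p
      positivity
    · gcongr; exact le_abs_self _
  -- rewriting
  set h : ℕ → ℝ := fun p => (rpR L p) ^ 2 * ω p + rpR L p * ω' p / Real.sqrt p with hh
  have hh0 : ∀ p, 0 ≤ h p := fun p => by
    have := hω0 p
    have := hω0' p
    have := rpR_nonneg hL0.le p
    positivity
  have hz : ∀ p, p.Prime → p ∉ Pset L → h p = 0 := fun p hp hpP => by
    simp [hh, rpR_zero hp hpP]
  have hprime : ∀ p ∈ Pset L, p.Prime := fun p hp => (mem_Pset.1 hp).2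
  have hprod : ∏' p : Nat.Primes, (1 + (rpR L p) ^ 2 * ω p + rpR L p * ω' p / Real.sqrt p) =
      ∏ p ∈ Pset L, (1 + h p) := by
    rw [← tprod_Pset L h hz]
    simp only [hh, add_assoc]
  have hsum : (∑ n ∈ Finset.Icc 1 N, ∑ m ∈ Finset.Icc 1 (N / n),
                if Nat.Coprime n m then
                  (resR L n) ^ 2 * resR L m * ω n * ω' m / Real.sqrt m else 0) =
      ∑ k ∈ Finset.Icc 1 N, sfun h k := by
    rw [hh, ← pair_sum_eq]
    refine Finset.sum_congr rfl fun n _ => Finset.sum_congr rfl fun m _ => ?_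
    rw [← resR_f ω hω1 hωm, ← resR_g ω' hω1' hωm']
    split_ifs
    · ring
    · rfl
  rw [hprod, hsum, one_mul]
  refine (rankin h hh0 _ hprime hz α hα0 N (by omega)).trans ?_
  have hpos : 0 ≤ ∏ p ∈ Pset L, (1 + h p) :=
    Finset.prod_nonneg fun p _ => by have := hh0 p; positivity
  have hN0 : (0 : ℝ) < N := by linarith
  have hS : ∑ p ∈ Pset L, ((p : ℝ) ^ α - 1) * h p ≤
      α * (aω * L ^ 2 / (2 * ℓ) + B1 * L ^ 2 / ℓ ^ 2 + α * L ^ 2 * (5 * B * Real.log x)) := by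
    calc ∑ p ∈ Pset L, ((p : ℝ) ^ α - 1) * h p
        ≤ ∑ p ∈ Pset L, (α * L ^ 2 * (ω p / (p * Real.log p)) + α ^ 2 * L ^ 2 * (ω p / p)
        + 2 * α * L * (ω' p / p)) := Finset.sum_le_sum fun p hp =>
          term_bound ω ω' hω0 hω0' L α hL0 hα0 hαℓ hp
      _ = α * L ^ 2 * ∑ p ∈ Pset L, (ω p / (p * Real.log p))
          + α ^ 2 * L ^ 2 * ∑ p ∈ Pset L, (ω p / p)
          + 2 * α * L * ∑ p ∈ Pset L, (ω' p / p) := by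
          rw [Finset.sum_add_distrib, Finset.sum_add_distrib, Finset.mul_sum, Finset.mul_sum,
            Finset.mul_sum]
      _ ≤ α * L ^ 2 * (aω / (2 * ℓ) + |Cω| / ℓ ^ 2)
          + α ^ 2 * L ^ 2 * (5 * B * Real.log x)
          + 2 * α * L * (|Cω'| * L / ℓ ^ 2) := by gcongr
      _ = _ := by rw [hB1]; ring
  calc (N : ℝ) ^ (-α) * ∏ p ∈ Pset L, (1 + (p : ℝ) ^ α * h p)
      ≤ (N : ℝ) ^ (-α) * (Real.exp (∑ p ∈ Pset L, ((p : ℝ) ^ α - 1) * h p)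
          * ∏ p ∈ Pset L, (1 + h p)) := by
        gcongr; exact prod_ratio h hh0 _ hprime α hα0
    _ = Real.exp (Real.exp x * (-α) + ∑ p ∈ Pset L, ((p : ℝ) ^ α - 1) * h p)
          * ∏ p ∈ Pset L, (1 + h p) := by
        rw [Real.rpow_def_of_pos hN0, hxexp, Real.exp_add, mul_assoc]
    _ ≤ _ := by
        rw [Real.rpow_def_of_pos hN0, hxexp]
        gcongr
        refine le_trans ?_ hfin
        linarith

/-- Small tails for the resonator (extreme values range).  Let `r(n)` be the resonator
sequence with parameter `L` and let `ω(n) ≥ 0` be a multiplicative function satisfying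
`Σ_{X ≤ p ≤ Y} ω(p)/(p log p) ≤ a_ω(1/log X − 1/log Y) + O_ω(1/log²X)` for all
`Y ≥ 2X ≥ 4`, for some `a_ω > 0`.  Then for every `N` with
`L ≤ √(a_ω⁻¹ log N log log N)` one has
`Σ_{n ≤ N} r(n)² ω(n) = (1 + o*(1)) Π_p (1 + r(p)² ω(p))`; and if additionally
`ω′(n) ≥ 0` is multiplicative with `Σ_{p ≤ X} ω′(p)/p ≪ e^{√(log X)}/log X`, then
`Σ_{nm ≤ N, (n,m)=1} r(n)² r(m) ω(n) ω′(m)/√m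
  = (1 + o*(1)) Π_p (1 + r(p)² ω(p) + r(p) ω′(p)/√p)`,
where `o*(1)` denotes a quantity that is `O_C(N^{−C/(log log N)³})` for any `C > 0`. -/
theorem resonator_small_tails
    (ω : ℕ → ℝ) (hω0 : ∀ n, 0 ≤ ω n) (hω1 : ω 1 = 1)
    (hωm : ∀ m n : ℕ, Nat.Coprime m n → ω (m * n) = ω m * ω n)
    (aω Cω : ℝ) (haω : 0 < aω)
    (hωbound : ∀ X Y : ℝ, 2 ≤ X → 2 * X ≤ Y →
      ∑ p ∈ (Finset.Icc ⌈X⌉₊ ⌊Y⌋₊).filter Nat.Prime, ω p / (p * Real.log p) ≤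
        aω * (1 / Real.log X - 1 / Real.log Y) + Cω / (Real.log X) ^ 2) :
    (∀ C : ℝ, 0 < C → ∃ D L₀ : ℝ, ∀ L : ℝ, L₀ ≤ L → ∀ N : ℕ, 16 ≤ N →
      L ≤ Real.sqrt (aω⁻¹ * Real.log N * Real.log (Real.log N)) →
        |(∑ n ∈ Finset.Icc 1 N, (resR L n) ^ 2 * ω n) -
            ∏' p : Nat.Primes, (1 + (rpR L p) ^ 2 * ω p)| ≤
          D * (N : ℝ) ^ (-C / (Real.log (Real.log N)) ^ 3) *
            ∏' p : Nat.Primes, (1 + (rpR L p) ^ 2 * ω p)) ∧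
    (∀ ω' : ℕ → ℝ, (∀ n, 0 ≤ ω' n) → ω' 1 = 1 →
      (∀ m n : ℕ, Nat.Coprime m n → ω' (m * n) = ω' m * ω' n) →
      ∀ Cω' : ℝ,
      (∀ X : ℝ, 2 ≤ X →
        ∑ p ∈ (Finset.Iic ⌊X⌋₊).filter Nat.Prime, ω' p / p ≤
          Cω' * Real.exp (Real.sqrt (Real.log X)) / Real.log X) →
      ∀ C : ℝ, 0 < C → ∃ D L₀ : ℝ, ∀ L : ℝ, L₀ ≤ L → ∀ N : ℕ, 16 ≤ N →
        L ≤ Real.sqrt (aω⁻¹ * Real.log N * Real.log (Real.log N)) →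
          |(∑ n ∈ Finset.Icc 1 N, ∑ m ∈ Finset.Icc 1 (N / n),
                if Nat.Coprime n m then
                  (resR L n) ^ 2 * resR L m * ω n * ω' m / Real.sqrt m else 0) -
              ∏' p : Nat.Primes, (1 + (rpR L p) ^ 2 * ω p + rpR L p * ω' p / Real.sqrt p)| ≤
            D * (N : ℝ) ^ (-C / (Real.log (Real.log N)) ^ 3) *
              ∏' p : Nat.Primes,
                (1 + (rpR L p) ^ 2 * ω p + rpR L p * ω' p / Real.sqrt p)) := by
  refine ⟨?_, fun ω' h0 h1 hm Cω' hb C _ =>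
    part2 ω hω0 hω1 hωm aω Cω haω hωbound ω' h0 h1 hm Cω' hb C⟩
  intro C _
  obtain ⟨D, L₀, h⟩ := part2 ω hω0 hω1 hωm aω Cω haω hωbound (fun n => if n = 1 then 1 else 0)
    (fun n => by split_ifs <;> norm_num) (by simp)
    (fun m n _ => by
      by_cases hm : m = 1 <;> by_cases hn : n = 1 <;> simp [hm, hn]) 0
    (fun X _ => by
      simp only [zero_mul, zero_div]
      refine (Finset.sum_eq_zero fun p hp => ?_).le
      have := (Finset.mem_filter.1 hp).2.one_lt
      simp [this.ne']) C
  refine ⟨D, L₀, fun L hL N hN hLM => ?_⟩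
  have := h L hL N hN hLM
  have e1 : ∏' p : Nat.Primes, (1 + (rpR L p) ^ 2 * ω p
      + rpR L p * (if (p : ℕ) = 1 then (1 : ℝ) else 0) / Real.sqrt p) =
      ∏' p : Nat.Primes, (1 + (rpR L p) ^ 2 * ω p) := by
    refine tprod_congr fun p => ?_
    simp [p.2.ne_one]
  have e2 : (∑ n ∈ Finset.Icc 1 N, ∑ m ∈ Finset.Icc 1 (N / n),
      if Nat.Coprime n m then
        (resR L n) ^ 2 * resR L m * ω n * (if m = 1 then (1 : ℝ) else 0) / Real.sqrt m else 0) =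
      ∑ n ∈ Finset.Icc 1 N, (resR L n) ^ 2 * ω n := by
    refine Finset.sum_congr rfl fun n hn => ?_
    obtain ⟨hn1, hn2⟩ := Finset.mem_Icc.1 hn
    rw [Finset.sum_eq_single 1]
    · simp [resR]
    · intro m _ hm
      simp [hm]
    · intro h1
      exact absurd (Finset.mem_Icc.2 ⟨le_rfl, (Nat.one_le_div_iff hn1).2 hn2⟩) h1
  rw [e1, e2] at this
  exact this

end
end

section
/- Let r(n) be the resonator sequence with parameter L, and let ω(n), ω′(n) ≥ 0 be multiplicative functions satisfying, for some a′_{ω′} > 0 and some 0 < δ, δ′ ≤ 1: (i) Σ_{X ≤ p ≤ Y} ω′(p)/(p log p) ≥ a′_{ω′}(1/log X − 1/log Y) + O(1/log²X) for all Y ≥ 2X ≥ 4, and (ii) Σ_{p ≤ X} ω(p)^δ ω′(p) ≪ X (log X)^δ and Σ_{p ≤ X} ω′(p)^{1+δ′} ≪ X^{1+δ′/2}. Then ∏_p ( 1 + r(p) ω′(p) / ( √p (1 + r(p)² ω(p)) ) ) ≫ exp( (a′_{ω′} + o*(1)) · L/(2 log L) ), where o*(1) = O(1/(log L)^{min(δ,δ′)}).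 -/
open Filter

noncomputable section

theorem aux_log (t d : ℝ) (ht : 0 ≤ t) (hd : 0 < d) (hd1 : d ≤ 1) :
    t - t ^ (1 + d) ≤ Real.log (1 + t) := by
  rcases le_total t 1 with h | h
  · rcases ht.eq_or_lt with h0 | h0
    · subst h0
      rw [Real.zero_rpow (by linarith)]; simp
    have e1 : t ^ 2 ≤ t ^ (1 + d) := by
      rw [← Real.rpow_natCast]
      apply Real.rpow_le_rpow_of_exponent_ge h0 h
      push_cast; linarith
    have e2 : t - t ^ 2 ≤ Real.log (1 + t) := by
      have := Real.one_sub_inv_le_log_of_pos (show 0 < 1 + t by linarith)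
      have h3 : t - t ^ 2 ≤ 1 - (1 + t)⁻¹ := by
        have : 1 - (1 + t)⁻¹ - (t - t ^ 2) = t ^ 3 / (1 + t) := by
          field_simp; ring
        have : 0 ≤ t ^ 3 / (1 + t) := by positivity
        linarith
      linarith
    linarith
  · have e1 : t ≤ t ^ (1 + d) := by
      conv_lhs => rw [← Real.rpow_one t]
      exact Real.rpow_le_rpow_of_exponent_le h (by linarith)
    have := Real.log_nonneg (show 1 ≤ 1 + t by linarith)
    linarith

theorem aux_inv (x d : ℝ) (hx : 0 ≤ x) (hd : 0 < d) (hd1 : d ≤ 1) :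
    1 - x ^ d ≤ 1 / (1 + x) := by
  have h0 : 0 ≤ 1 / (1 + x) := by positivity
  rcases le_total x 1 with h | h
  · have e1 : x ≤ x ^ d := by
      rcases hx.eq_or_lt with h0 | h0
      · subst h0; rw [Real.zero_rpow hd.ne']
      conv_lhs => rw [← Real.rpow_one x]
      exact Real.rpow_le_rpow_of_exponent_ge h0 h hd1
    have : 1 - x ≤ 1 / (1 + x) := by
      rw [le_div_iff₀ (by linarith)]; nlinarith
    linarith
  · have := Real.one_le_rpow h hd.le
    linarith

theorem aux_block (f : ℕ → ℝ) (hf : ∀ n, 0 ≤ f n) (C α β η γ : ℝ)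
    (hα : 0 < α) (hβ : 0 ≤ β) (hη : 0 < η) (hγ : β ≤ γ)
    (h : ∀ X : ℝ, 2 ≤ X → ∑ p ∈ (Finset.Iic ⌊X⌋₊).filter Nat.Prime, f p ≤
      C * X ^ α * (Real.log X) ^ β) (hC : 0 ≤ C)
    (Z : ℝ) (hZ : 2 ≤ Z) (F : Finset ℕ)
    (hF : ∀ p ∈ F, p.Prime ∧ Z ≤ p ∧ (p : ℝ) < 2 * Z) :
    ∑ p ∈ F, f p / ((p : ℝ) ^ (α + η) * (Real.log p) ^ γ) ≤
      C * 2 ^ (α + β) * (Z ^ (-η) * (Real.log Z) ^ (β - γ)) := by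
  have hZ0 : 0 < Z := by linarith
  have hl : 0 < Real.log Z := Real.log_pos (by linarith)
  have hl2 : Real.log (2 * Z) ≤ 2 * Real.log Z := by
    rw [Real.log_mul (by norm_num) hZ0.ne']
    have := Real.log_le_log (by norm_num) hZ
    linarith
  have hl3 : 0 ≤ Real.log (2 * Z) := Real.log_nonneg (by linarith)
  have s1 : ∑ p ∈ F, f p / ((p : ℝ) ^ (α + η) * (Real.log p) ^ γ) ≤
      ∑ p ∈ F, f p / (Z ^ (α + η) * (Real.log Z) ^ γ) := by
    apply Finset.sum_le_sum
    intro p hp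
    obtain ⟨_, h2, _⟩ := hF p hp
    have := Real.log_le_log hZ0 h2
    apply div_le_div_of_nonneg_left (hf p) (by positivity)
    have a1 := Real.rpow_le_rpow hZ0.le h2 (show 0 ≤ α + η by linarith)
    have a2 := Real.rpow_le_rpow hl.le this (show 0 ≤ γ by linarith)
    exact mul_le_mul a1 a2 (by positivity) (by positivity)
  have s2 : ∑ p ∈ F, f p ≤ C * (2 * Z) ^ α * (Real.log (2 * Z)) ^ β := by
    refine le_trans ?_ (h (2 * Z) (by linarith))
    apply Finset.sum_le_sum_of_subset_of_nonneg
    · intro p hp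
      obtain ⟨h1, _, h3⟩ := hF p hp
      simp only [Finset.mem_filter, Finset.mem_Iic]
      exact ⟨Nat.le_floor h3.le, h1⟩
    · intros; exact hf _
  have s3 : (Real.log (2 * Z)) ^ β ≤ 2 ^ β * (Real.log Z) ^ β := by
    rw [← Real.mul_rpow (by norm_num) hl.le]
    exact Real.rpow_le_rpow hl3 hl2 hβ
  have s4 : ∑ p ∈ F, f p ≤ C * (2 ^ α * Z ^ α) * (2 ^ β * (Real.log Z) ^ β) := by
    rw [← Real.mul_rpow (by norm_num) hZ0.le]
    exact s2.trans (mul_le_mul_of_nonneg_left s3 (by positivity))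
  rw [← Finset.sum_div] at s1
  refine s1.trans ?_
  rw [div_le_iff₀ (by positivity)]
  refine s4.trans (le_of_eq ?_)
  have e1 : Z ^ (-η) * Z ^ (α + η) = Z ^ α := by
    rw [← Real.rpow_add hZ0]; congr 1; ring
  have e2 : (Real.log Z) ^ (β - γ) * (Real.log Z) ^ γ = (Real.log Z) ^ β := by
    rw [← Real.rpow_add hl]; congr 1; ring
  have e3 : (2 : ℝ) ^ (α + β) = 2 ^ α * 2 ^ β := Real.rpow_add (by norm_num) _ _
  rw [← e1, ← e2, e3]; ring

theorem aux_dyadic (f : ℕ → ℝ) (hf : ∀ n, 0 ≤ f n) (C α β η γ : ℝ)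
    (hα : 0 < α) (hβ : 0 ≤ β) (hη : 0 < η) (hγ : β ≤ γ)
    (h : ∀ X : ℝ, 2 ≤ X → ∑ p ∈ (Finset.Iic ⌊X⌋₊).filter Nat.Prime, f p ≤
      C * X ^ α * (Real.log X) ^ β) :
    ∃ A : ℝ, 0 ≤ A ∧ ∀ (M : ℝ), 2 ≤ M → ∀ F : Finset ℕ, (∀ p ∈ F, p.Prime ∧ M ≤ p) →
    ∑ p ∈ F, f p / ((p : ℝ) ^ (α + η) * (Real.log p) ^ γ) ≤
      A * (M ^ (-η) * (Real.log M) ^ (β - γ)) := by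
  have hC : 0 ≤ C := by
    have h2 := h 2 le_rfl
    have h3 : 0 ≤ ∑ p ∈ (Finset.Iic ⌊(2:ℝ)⌋₊).filter Nat.Prime, f p :=
      Finset.sum_nonneg fun _ _ => hf _
    have hl : 0 < Real.log 2 := Real.log_pos (by norm_num)
    have h4 : 0 < (2:ℝ) ^ α * (Real.log 2) ^ β := by positivity
    by_contra hc
    push Not at hc
    nlinarith
  set q : ℝ := 2 ^ (-η) with hq
  have hq0 : 0 < q := by positivity
  have hq1 : q < 1 := Real.rpow_lt_one_of_one_lt_of_neg (by norm_num) (by linarith)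
  refine ⟨C * 2 ^ (α + β) * (1 - q)⁻¹, ?_, ?_⟩
  · have : 0 < 1 - q := by linarith
    positivity
  intro M hM F hF
  have hM0 : 0 < M := by linarith
  have hl : 0 < Real.log M := Real.log_pos (by linarith)
  set D := M ^ (-η) * (Real.log M) ^ (β - γ) with hD
  have hD0 : 0 < D := by positivity
  have key : ∀ N : ℕ, ∀ F : Finset ℕ, (∀ p ∈ F, p.Prime ∧ M ≤ p ∧ (p : ℝ) < 2 ^ N * M) →
      ∑ p ∈ F, f p / ((p : ℝ) ^ (α + η) * (Real.log p) ^ γ) ≤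
        C * 2 ^ (α + β) * (∑ k ∈ Finset.range N, q ^ k) * D := by
    intro N
    induction N with
    | zero =>
      intro F hF
      have : F = ∅ := by
        apply Finset.eq_empty_of_forall_notMem
        intro p hp
        obtain ⟨_, a, b⟩ := hF p hp
        simp at b; linarith
      subst this; simp
    | succ N ih =>
      intro F hF
      rw [← Finset.sum_filter_add_sum_filter_not F (fun p : ℕ => (p : ℝ) < 2 ^ N * M)]
      have i1 := ih (F.filter (fun p : ℕ => (p : ℝ) < 2 ^ N * M)) (by
        intro p hp
        rw [Finset.mem_filter] at hp
        obtain ⟨a, b, c⟩ := hF p hp.1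
        exact ⟨a, b, hp.2⟩)
      have h2N : (1 : ℝ) ≤ 2 ^ N := one_le_pow₀ (by norm_num)
      have hZM : M ≤ 2 ^ N * M := by nlinarith
      have i2 := aux_block f hf C α β η γ hα hβ hη hγ h hC (2 ^ N * M) (by linarith)
        (F.filter (fun p : ℕ => ¬ (p : ℝ) < 2 ^ N * M)) (by
        intro p hp
        rw [Finset.mem_filter] at hp
        obtain ⟨a, b, c⟩ := hF p hp.1
        refine ⟨a, not_lt.mp hp.2, ?_⟩
        rw [pow_succ] at c; linarith)
      have i3 : (2 ^ N * M) ^ (-η) * (Real.log (2 ^ N * M)) ^ (β - γ) ≤ q ^ N * D := by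
        have j1 : (2 ^ N * M) ^ (-η) = q ^ N * M ^ (-η) := by
          rw [Real.mul_rpow (by positivity) hM0.le, hq, ← Real.rpow_natCast, ← Real.rpow_natCast,
            ← Real.rpow_mul (by norm_num), ← Real.rpow_mul (by norm_num), mul_comm (N : ℝ)]
        have j2 : (Real.log (2 ^ N * M)) ^ (β - γ) ≤ (Real.log M) ^ (β - γ) :=
          Real.rpow_le_rpow_of_nonpos hl (Real.log_le_log hM0 hZM) (by linarith)
        rw [j1, hD, ← mul_assoc]
        exact mul_le_mul_of_nonneg_left j2 (by positivity)
      have i4 := mul_le_mul_of_nonneg_left i3 (show 0 ≤ C * 2 ^ (α + β) by positivity)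
      rw [Finset.sum_range_succ]
      calc _ ≤ _ := add_le_add i1 (i2.trans i4)
        _ = _ := by ring
  obtain ⟨N, hN⟩ : ∃ N : ℕ, ∀ p ∈ F, (p : ℝ) < 2 ^ N * M := by
    refine ⟨F.sup id, fun p hp => ?_⟩
    have a1 : p ≤ F.sup id := Finset.le_sup (f := id) hp
    have a2 : F.sup id < 2 ^ (F.sup id) := Nat.lt_two_pow_self
    have a3 : (p : ℝ) < 2 ^ (F.sup id) := by exact_mod_cast a1.trans_lt a2
    nlinarith
  refine (key N F fun p hp => ⟨(hF p hp).1, (hF p hp).2, hN p hp⟩).trans ?_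
  have : ∑ k ∈ Finset.range N, q ^ k ≤ (1 - q)⁻¹ := by
    rw [← tsum_geometric_of_lt_one hq0.le hq1]
    exact (summable_geometric_of_lt_one hq0.le hq1).sum_le_tsum _ fun _ _ => by positivity
  gcongr

theorem aux_term (L p w w' d d' : ℝ) (hL : 0 < L) (hp : 1 < p) (hw : 0 ≤ w) (hw' : 0 ≤ w')
    (hd : 0 < d) (hd1 : d ≤ 1) (hd' : 0 < d') (hd'1 : d' ≤ 1) :
    L * (w' / (p * Real.log p)) - L ^ (1 + 2 * d) *
        (w ^ d * w' / (p ^ (1 + d) * (Real.log p) ^ (1 + 2 * d)))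
      - L ^ (1 + d') * (w' ^ (1 + d') / (p ^ (1 + d' / 2 + d' / 2) * (Real.log p) ^ (1 + d'))) ≤
    Real.log (1 + (L / (Real.sqrt p * Real.log p)) * w' /
      (Real.sqrt p * (1 + (L / (Real.sqrt p * Real.log p)) ^ 2 * w))) := by
  have hp0 : 0 < p := by linarith
  have hl : 0 < Real.log p := Real.log_pos hp
  have hs : 0 < Real.sqrt p := Real.sqrt_pos.mpr hp0
  have hss : Real.sqrt p ^ 2 = p := Real.sq_sqrt hp0.le
  set l := Real.log p
  set s := Real.sqrt p
  set x := (L / (s * l)) ^ 2 * w with hx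
  have hx0 : 0 ≤ x := by positivity
  set u := L * (w' / (p * l)) with hu
  have hu0 : 0 ≤ u := by positivity
  have ht : (L / (s * l)) * w' / (s * (1 + x)) = u * (1 / (1 + x)) := by
    rw [hu, ← hss]; field_simp
  rw [ht]
  have h1x : 1 / (1 + x) ≤ 1 := by rw [div_le_one (by linarith)]; linarith
  have h0x : 0 ≤ 1 / (1 + x) := by positivity
  have e1 := aux_log (u * (1 / (1 + x))) d' (by positivity) hd' hd'1
  have e2 : (u * (1 / (1 + x))) ^ (1 + d') ≤ u ^ (1 + d') :=
    Real.rpow_le_rpow (by positivity) (mul_le_of_le_one_right hu0 h1x) (by linarith)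
  have e3 := mul_le_mul_of_nonneg_left (aux_inv x d hx0 hd hd1) hu0
  have e4 : u ^ (1 + d') =
      L ^ (1 + d') * (w' ^ (1 + d') / (p ^ (1 + d' / 2 + d' / 2) * l ^ (1 + d'))) := by
    rw [hu, Real.mul_rpow hL.le (by positivity), Real.div_rpow hw' (by positivity),
      Real.mul_rpow hp0.le hl.le]
    congr 4; ring
  have e5 : u * x ^ d = L ^ (1 + 2 * d) * (w ^ d * w' / (p ^ (1 + d) * l ^ (1 + 2 * d))) := by
    have k : ∀ y : ℝ, 0 < y → y ^ (1 + 2 * d) = y * (y ^ 2) ^ d := by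
      intro y hy
      rw [Real.rpow_add hy, Real.rpow_one, Real.rpow_mul hy.le]
      norm_num
    have hx' : x = L ^ 2 / (p * l ^ 2) * w := by rw [hx, div_pow, mul_pow, hss]
    rw [hx', Real.mul_rpow (by positivity) hw, Real.div_rpow (by positivity) (by positivity),
      Real.mul_rpow hp0.le (by positivity), k L hL, k l hl, Real.rpow_add hp0, Real.rpow_one, hu]
    have : 0 < (l ^ 2) ^ d := by positivity
    have : 0 < p ^ d := by positivity
    field_simp
  rw [← e4, ← e5]
  linarith

/-- The resonator gain (extreme values range).  Let `r(n)` be the resonator sequence with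
parameter `L`, and let `ω, ω′ ≥ 0` be multiplicative functions satisfying, for some
`a′ > 0` and `0 < δ, δ′ ≤ 1`:
`Σ_{X ≤ p ≤ Y} ω′(p)/(p log p) ≥ a′(1/log X − 1/log Y) + O(1/log²X)` for all `Y ≥ 2X ≥ 4`,
`Σ_{p ≤ X} ω(p)^δ ω′(p) ≪ X (log X)^δ` and `Σ_{p ≤ X} ω′(p)^{1+δ′} ≪ X^{1+δ′/2}`.  Then
`Π_p (1 + r(p)ω′(p)/(√p(1 + r(p)²ω(p)))) ≫ exp((a′ + o*(1)) L/(2 log L))`, where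
`o*(1) = O(1/(log L)^{min(δ,δ′)})`. -/
theorem resonator_gain
    (ω ω' : ℕ → ℝ) (hω0 : ∀ n, 0 ≤ ω n) (hω'0 : ∀ n, 0 ≤ ω' n)
    (hωm : ∀ m n : ℕ, Nat.Coprime m n → ω (m * n) = ω m * ω n)
    (hω'm : ∀ m n : ℕ, Nat.Coprime m n → ω' (m * n) = ω' m * ω' n)
    (a' δ δ' : ℝ) (ha' : 0 < a')
    (hδ : 0 < δ) (hδ1 : δ ≤ 1) (hδ' : 0 < δ') (hδ'1 : δ' ≤ 1)
    (C₁ : ℝ)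
    (h1 : ∀ X Y : ℝ, 2 ≤ X → 2 * X ≤ Y →
      a' * (1 / Real.log X - 1 / Real.log Y) - C₁ / (Real.log X) ^ 2 ≤
        ∑ p ∈ (Finset.Icc ⌈X⌉₊ ⌊Y⌋₊).filter Nat.Prime, ω' p / (p * Real.log p))
    (C₂ : ℝ)
    (h2 : ∀ X : ℝ, 2 ≤ X →
      ∑ p ∈ (Finset.Iic ⌊X⌋₊).filter Nat.Prime, (ω p) ^ δ * ω' p ≤
        C₂ * X * (Real.log X) ^ δ)
    (C₃ : ℝ)
    (h3 : ∀ X : ℝ, 2 ≤ X →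
      ∑ p ∈ (Finset.Iic ⌊X⌋₊).filter Nat.Prime, (ω' p) ^ (1 + δ') ≤
        C₃ * X ^ (1 + δ' / 2)) :
    ∃ c K L₀ : ℝ, 0 < c ∧ 0 ≤ K ∧ ∀ L : ℝ, L₀ ≤ L →
      c * Real.exp ((a' - K / (Real.log L) ^ (min δ δ')) * (L / (2 * Real.log L))) ≤
        ∏' p : Nat.Primes,
          (1 + rpR L p * ω' p / (Real.sqrt p * (1 + (rpR L p) ^ 2 * ω p))) := by
  obtain ⟨A, hA0, hA⟩ := aux_dyadic (fun p => (ω p) ^ δ * ω' p)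
    (fun n => mul_nonneg (Real.rpow_nonneg (hω0 n) _) (hω'0 n)) C₂ 1 δ δ (1 + 2 * δ)
    one_pos hδ.le hδ (by linarith) (by intro X hX; rw [Real.rpow_one]; exact h2 X hX)
  obtain ⟨B, hB0, hB⟩ := aux_dyadic (fun p => (ω' p) ^ (1 + δ'))
    (fun n => Real.rpow_nonneg (hω'0 n) _) C₃ (1 + δ' / 2) 0 (δ' / 2) (1 + δ')
    (by linarith) le_rfl (by linarith) (by linarith)
    (by intro X hX; rw [Real.rpow_zero, mul_one]; exact h3 X hX)
  refine ⟨1, 2 * (a' + |C₁| + A + B), Real.exp 3, one_pos, by positivity, ?_⟩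
  intro L hL
  have hL0 : 0 < L := (Real.exp_pos 3).trans_le hL
  have hl : 3 ≤ Real.log L := (Real.le_log_iff_exp_le hL0).mpr hL
  have hL4 : 4 ≤ L := by
    have := Real.add_one_le_exp (3:ℝ)
    linarith
  set l := Real.log L with hldef
  have hl0 : 0 < l := by linarith
  have hlogL2 : Real.log (L ^ 2) = 2 * l := by rw [Real.log_pow, ← hldef]; norm_num
  set P := (Finset.Icc ⌈L ^ 2⌉₊ ⌊Real.exp (l ^ 2)⌋₊).filter Nat.Prime with hP
  have hPm : ∀ p : ℕ, p ∈ P ↔ (L ^ 2 ≤ (p : ℝ) ∧ (p : ℝ) ≤ Real.exp (l ^ 2)) ∧ p.Prime := by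
    intro p
    rw [hP, Finset.mem_filter, Finset.mem_Icc, Nat.ceil_le, Nat.le_floor_iff (Real.exp_pos _).le]
  set g : ℕ → ℝ := fun p =>
    1 + rpR L p * ω' p / (Real.sqrt p * (1 + (rpR L p) ^ 2 * ω p)) with hg
  have hprod : ∏' p : Nat.Primes, g p = ∏ p ∈ P, g p := by
    have e := tprod_subtype {p : ℕ | p.Prime} g
    have e' : ∏' p : Nat.Primes, g p = ∏' p : {p : ℕ | p.Prime}, g p := rfl
    rw [e', e, tprod_eq_prod (s := P)]
    · apply Finset.prod_congr rfl
      intro p hp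
      exact Set.mulIndicator_of_mem (s := {p : ℕ | p.Prime}) ((hPm p).1 hp).2 g
    · intro p hp
      by_cases hpp : p.Prime
      · rw [Set.mulIndicator_of_mem (s := {p : ℕ | p.Prime}) hpp]
        have : ¬ (L ^ 2 ≤ (p : ℝ) ∧ (p : ℝ) ≤ Real.exp (l ^ 2)) := fun h => hp ((hPm p).2 ⟨h, hpp⟩)
        simp only [hg]
        rw [rpR, if_neg this]; simp
      · exact Set.mulIndicator_of_notMem (s := {p : ℕ | p.Prime}) hpp g
  have hgpos : ∀ p ∈ P, 0 < g p := by
    intro p hp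
    have hr : 0 ≤ rpR L p := by
      rw [rpR]; split_ifs
      · have := Real.log_natCast_nonneg p
        positivity
      · exact le_rfl
    have := hω0 p
    have := hω'0 p
    simp only [hg]
    positivity
  change 1 * Real.exp ((a' - 2 * (a' + |C₁| + A + B) / l ^ (min δ δ')) * (L / (2 * l))) ≤
    ∏' p : Nat.Primes, g p
  rw [hprod, one_mul, ← Real.le_log_iff_exp_le (Finset.prod_pos hgpos),
    Real.log_prod (fun p hp => (hgpos p hp).ne')]
  have hterm : ∀ p ∈ P, L * (ω' p / (p * Real.log p)) - L ^ (1 + 2 * δ) *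
        ((ω p) ^ δ * ω' p / ((p : ℝ) ^ (1 + δ) * (Real.log p) ^ (1 + 2 * δ)))
      - L ^ (1 + δ') * ((ω' p) ^ (1 + δ') /
        ((p : ℝ) ^ (1 + δ' / 2 + δ' / 2) * (Real.log p) ^ (1 + δ'))) ≤ Real.log (g p) := by
    intro p hp
    have hp' := (hPm p).1 hp
    have h := aux_term L p (ω p) (ω' p) δ δ' hL0 (by exact_mod_cast hp'.2.one_lt) (hω0 p) (hω'0 p)
      hδ hδ1 hδ' hδ'1
    simp only [hg]
    rw [rpR, if_pos hp'.1]
    exact h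
  refine le_trans ?_ (Finset.sum_le_sum hterm)
  rw [Finset.sum_sub_distrib, Finset.sum_sub_distrib, ← Finset.mul_sum, ← Finset.mul_sum,
    ← Finset.mul_sum]
  have hM : (2:ℝ) ≤ L ^ 2 := by nlinarith
  have hPF : ∀ p ∈ P, p.Prime ∧ L ^ 2 ≤ (p : ℝ) := fun p hp => ⟨((hPm p).1 hp).2, ((hPm p).1 hp).1.1⟩
  have b1 := h1 (L ^ 2) (Real.exp (l ^ 2)) hM (by
    rw [← Real.log_le_iff_le_exp (by positivity), Real.log_mul (by norm_num) (by positivity), hlogL2]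
    have := Real.log_two_lt_d9
    nlinarith)
  rw [hlogL2, Real.log_exp] at b1
  have b2 := hA (L ^ 2) hM P hPF
  have b3 := hB (L ^ 2) hM P hPF
  rw [hlogL2] at b2 b3
  set m := min δ δ' with hm
  have hlm : 0 < l ^ m := by positivity
  have hpw : ∀ e : ℝ, m ≤ e → (2 * l) ^ (-(1 + e)) ≤ 1 / (l * l ^ m) := by
    intro e he
    have hm0 : 0 < m := lt_min hδ hδ'
    calc (2 * l) ^ (-(1 + e)) ≤ l ^ (-(1 + e)) :=
          Real.rpow_le_rpow_of_nonpos hl0 (by linarith) (by linarith)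
      _ ≤ l ^ (-(1 + m)) := Real.rpow_le_rpow_of_exponent_le (by linarith) (by linarith)
      _ = 1 / (l * l ^ m) := by
          rw [Real.rpow_neg hl0.le, Real.rpow_add hl0, Real.rpow_one, one_div]
  have hLp : ∀ e : ℝ, L ^ (1 + 2 * e) * (L ^ 2) ^ (-e) = L := by
    intro e
    rw [← Real.rpow_natCast, ← Real.rpow_mul hL0.le, ← Real.rpow_add hL0]
    conv_rhs => rw [← Real.rpow_one L]
    congr 1; push_cast; ring
  have c2 : L ^ (1 + 2 * δ) * ∑ p ∈ P,
      ((ω p) ^ δ * ω' p / ((p : ℝ) ^ (1 + δ) * (Real.log p) ^ (1 + 2 * δ))) ≤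
      A * (L / (l * l ^ m)) := by
    calc _ ≤ L ^ (1 + 2 * δ) * (A * ((L ^ 2) ^ (-δ) * (2 * l) ^ (δ - (1 + 2 * δ)))) :=
          mul_le_mul_of_nonneg_left b2 (by positivity)
      _ = A * ((L ^ (1 + 2 * δ) * (L ^ 2) ^ (-δ)) * (2 * l) ^ (-(1 + δ))) := by
          rw [show δ - (1 + 2 * δ) = -(1 + δ) by ring]; ring
      _ ≤ A * (L * (1 / (l * l ^ m))) := by
          rw [hLp]
          exact mul_le_mul_of_nonneg_left
            (mul_le_mul_of_nonneg_left (hpw δ (min_le_left _ _)) hL0.le) hA0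
      _ = _ := by ring
  have c3 : L ^ (1 + δ') * ∑ p ∈ P, ((ω' p) ^ (1 + δ') /
        ((p : ℝ) ^ (1 + δ' / 2 + δ' / 2) * (Real.log p) ^ (1 + δ'))) ≤
      B * (L / (l * l ^ m)) := by
    calc _ ≤ L ^ (1 + δ') * (B * ((L ^ 2) ^ (-(δ' / 2)) * (2 * l) ^ (0 - (1 + δ')))) :=
          mul_le_mul_of_nonneg_left b3 (by positivity)
      _ = B * ((L ^ (1 + 2 * (δ' / 2)) * (L ^ 2) ^ (-(δ' / 2))) * (2 * l) ^ (-(1 + δ'))) := by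
          rw [show 0 - (1 + δ') = -(1 + δ') by ring, show 1 + 2 * (δ' / 2) = 1 + δ' by ring]; ring
      _ ≤ B * (L * (1 / (l * l ^ m))) := by
          rw [hLp]
          exact mul_le_mul_of_nonneg_left
            (mul_le_mul_of_nonneg_left (hpw δ' (min_le_right _ _)) hL0.le) hB0
      _ = _ := by ring
  have c1 := mul_le_mul_of_nonneg_left b1 hL0.le
  have hlm1 : l ^ m ≤ l := by
    conv_rhs => rw [← Real.rpow_one l]
    exact Real.rpow_le_rpow_of_exponent_le (by linarith) ((min_le_left _ _).trans hδ1)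
  have c4 : L / l ^ 2 ≤ L / (l * l ^ m) := by
    apply div_le_div_of_nonneg_left hL0.le (by positivity)
    nlinarith
  have c5 : L * (a' * (1 / (2 * l) - 1 / l ^ 2) - C₁ / (2 * l) ^ 2) =
      a' * (L / (2 * l)) - (a' + C₁ / 4) * (L / l ^ 2) := by
    field_simp; ring
  have c6 : (a' + C₁ / 4) * (L / l ^ 2) ≤ (a' + |C₁|) * (L / (l * l ^ m)) := by
    have k1 : a' + C₁ / 4 ≤ a' + |C₁| := by
      have := le_abs_self C₁
      have := abs_nonneg C₁
      linarith
    have k2 : 0 ≤ L / l ^ 2 := by positivity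
    have k3 : 0 ≤ a' + |C₁| := by positivity
    exact (mul_le_mul_of_nonneg_right k1 k2).trans (mul_le_mul_of_nonneg_left c4 k3)
  have c7 : (a' - 2 * (a' + |C₁| + A + B) / l ^ m) * (L / (2 * l)) =
      a' * (L / (2 * l)) - (a' + |C₁| + A + B) * (L / (l * l ^ m)) := by
    field_simp
  rw [c7]
  rw [c5] at c1
  linarith


end
end
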